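/- Let G be a finite Frobenius group with Frobenius kernel K and Frobenius complement H, and suppose that G has perfect order classes and that H is nilpotent. Then H is cyclic. -/

import Mathlib

/-- The number of elements of order `n` in the group `G`. -/
noncomputable def orderCount (G : Type*) [Group G] (n : ℕ) : ℕ :=
  Nat.card {g : G // orderOf g = n}

/-- A group has *perfect order classes* if, for every positive integer `n`, the number of
elements of order `n` is either zero or a divisor of the order of the group. -/
def PerfectOrderClasses (G : Type*) [Group G] : Prop :=
  ∀ n : ℕ, 0 < n → orderCount G n = 0 ∨ orderCount G n ∣ Nat.card G

/-- `G` is a Frobenius group with Frobenius kernel `K` and Frobenius complement `H`: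
`K` is a nontrivial proper normal subgroup, `H` a subgroup with `K ⊓ H = ⊥` and `KH = G`,
and the conjugation action of `H` on `K` is fixed-point-free. -/
def IsFrobeniusWith {G : Type*} [Group G] (K H : Subgroup G) : Prop :=
  K ≠ ⊥ ∧ K ≠ ⊤ ∧ K.Normal ∧ K ⊓ H = ⊥ ∧
    (∀ g : G, ∃ k ∈ K, ∃ h ∈ H, g = k * h) ∧
    ∀ h ∈ H, h ≠ 1 → ∀ k ∈ K, k ≠ 1 → h * k * h⁻¹ ≠ k

theorem IsPGroup.exists_orderOf_eq_mem_center {p : ℕ} [Fact p.Prime] {P : Type*} [Group P]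
    [Finite P] (hP : IsPGroup p P) (N : Subgroup P) [N.Normal] (hN : N ≠ ⊥) :
    ∃ z ∈ N, orderOf z = p ∧ z ∈ Subgroup.center P := by
  have hdvd : p ∣ Nat.card N :=
    ((hP.to_subgroup N).card_eq_or_dvd).resolve_left fun h => hN (Subgroup.card_eq_one.mp h)
  have hC : IsPGroup p (ConjAct P) := hP.of_equiv ConjAct.toConjAct
  have hfix : (1 : N) ∈ MulAction.fixedPoints (ConjAct P) N := fun g => smul_one g
  obtain ⟨b, hb, hb1⟩ := hC.exists_fixed_point_of_prime_dvd_card_of_fixed_point N hdvd hfix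
  have hbc : (b : P) ∈ Subgroup.center P := by
    rw [Subgroup.mem_center_iff]
    intro g
    have h := congrArg Subtype.val (hb (ConjAct.toConjAct g))
    rw [ConjAct.Subgroup.val_conj_smul, ConjAct.toConjAct_smul] at h
    exact mul_inv_eq_iff_eq_mul.mp h
  have hb1' : (b : P) ≠ 1 := fun h => hb1 (Subtype.ext h.symm)
  have hpo : p ∣ orderOf (b : P) := hP.dvd_orderOf hb1'
  have ho : orderOf (b : P) ≠ 0 := (orderOf_pos _).ne'
  exact ⟨b ^ (orderOf (b : P) / p), N.pow_mem b.2 _, orderOf_pow_orderOf_div ho hpo,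
    Subgroup.pow_mem _ hbc _⟩

theorem mul_pow_of_conj_eq_pow {G : Type*} [Group G] {b x : G} {u : ℕ}
    (h : x * b * x⁻¹ = b ^ u) (n : ℕ) :
    (b * x) ^ n = b ^ (∑ i ∈ Finset.range n, u ^ i) * x ^ n := by
  induction n with
  | zero => simp
  | succ n ih =>
    have hs (s : ℕ) : x * b ^ s = b ^ (u * s) * x := by
      rw [pow_mul, ← h, conj_pow]; group
    rw [pow_succ', ih, geom_sum_succ, pow_succ' b, pow_succ' x, mul_assoc b, ← mul_assoc x, hs]
    simp only [mul_assoc]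

/-- Let `⟨a⟩` contain every element of order `p` of a `p`-group, and let `x` normalize `⟨a⟩` with
`x ^ p ∈ ⟨a⟩`. If the geometric sum attached to the action of `x` is `p` times a unit, then
`⟨a⟩` does not split off: either `x ∈ ⟨a⟩` or `⟨a⟩ ≤ ⟨x⟩`. -/
theorem IsPGroup.mem_zpowers_or_mem_zpowers {p : ℕ} [hp : Fact p.Prime] {P : Type*} [Group P]
    [Finite P] (hP : IsPGroup p P) {a x : P} {u s : ℕ}
    (ha : ∀ y : P, orderOf y = p → y ∈ Subgroup.zpowers a)
    (hxp : x ^ p ∈ Subgroup.zpowers a) (hu : x * a * x⁻¹ = a ^ u)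
    (hs : ∑ i ∈ Finset.range p, u ^ i = p * s) (hps : ¬ p ∣ s) :
    x ∈ Subgroup.zpowers a ∨ a ∈ Subgroup.zpowers x := by
  have hcop {s : ℕ} (h : ¬ p ∣ s) : p.Coprime s := (Nat.Prime.coprime_iff_not_dvd hp.out).mpr h
  obtain ⟨t, ht⟩ := (mem_powers_iff_mem_zpowers (x := a)).mpr hxp
  simp only at ht
  by_cases hpt : p ∣ t
  · left
    obtain ⟨t, rfl⟩ := hpt
    set A := Subgroup.zpowers a
    obtain ⟨b, hb⟩ := ((hP.to_subgroup A).powEquiv (hcop hps)).surjective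
      ⟨(a ^ t)⁻¹, A.inv_mem (A.pow_mem (Subgroup.mem_zpowers a) _)⟩
    have hb' : (b : P) ^ s = (a ^ t)⁻¹ := by
      simpa using congrArg Subtype.val hb
    obtain ⟨j, hj⟩ := (mem_powers_iff_mem_zpowers (x := a)).mpr b.2
    simp only at hj
    have hconj : x * b * x⁻¹ = (b : P) ^ u := by
      rw [← hj, ← pow_mul, mul_comm, pow_mul, ← hu, conj_pow]
    have hpow : ((b : P) * x) ^ p = 1 := by
      rw [mul_pow_of_conj_eq_pow hconj, hs, mul_comm p s, pow_mul, hb', ← ht, mul_comm p t,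
        pow_mul, inv_pow, inv_mul_cancel]
    have hmem : (b : P) * x ∈ A := by
      by_cases h1 : (b : P) * x = 1
      · rw [h1]; exact A.one_mem
      · exact ha _ (orderOf_eq_prime hpow h1)
    exact (A.mul_mem_cancel_left b.2).mp hmem
  · right
    have : a ^ t ∈ Subgroup.zpowers x := ht ▸ Subgroup.pow_mem _ (Subgroup.mem_zpowers x) _
    have hc : (orderOf a).Coprime t := hP.orderOf_coprime (hcop hpt) a
    obtain ⟨m, hm⟩ := exists_pow_eq_self_of_coprime hc.symm
    exact hm ▸ Subgroup.pow_mem _ this m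

theorem IsPGroup.exists_normal_cyclic_self_centralizing {p : ℕ} [hp : Fact p.Prime] {P : Type*}
    [Group P] [Finite P] [Nontrivial P] (hP : IsPGroup p P)
    (hcomm : ∀ x y : P, orderOf x = p → orderOf y = p → Commute x y → y ∈ Subgroup.zpowers x) :
    ∃ a : P, (Subgroup.zpowers a).Normal ∧ (∀ y : P, orderOf y = p → y ∈ Subgroup.zpowers a) ∧
      ∀ x : P, Commute x a → x ∈ Subgroup.zpowers a := by
  obtain ⟨z, -, hz, hzc⟩ := hP.exists_orderOf_eq_mem_center ⊤ top_ne_bot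
  have hz' (y : P) (hy : orderOf y = p) : y ∈ Subgroup.zpowers z :=
    hcomm z y hz hy (Subgroup.mem_center_iff.mp hzc y).symm
  let S : Set (Subgroup P) :=
    {A | A.Normal ∧ z ∈ A ∧ ∃ a, A = Subgroup.zpowers a}
  have hS : S.Nonempty := by
    refine ⟨Subgroup.zpowers z, ⟨fun n hn g => ?_⟩, Subgroup.mem_zpowers z, z, rfl⟩
    have hn' : n ∈ Subgroup.center P := (Subgroup.zpowers_le.mpr hzc) hn
    rwa [Subgroup.mem_center_iff.mp hn' g, mul_inv_cancel_right]
  obtain ⟨A, hA⟩ := (Set.toFinite S).exists_maximal hS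
  obtain ⟨⟨hAn, hzA, a, rfl⟩, hmax⟩ := hA
  have hall (y : P) (hy : orderOf y = p) : y ∈ Subgroup.zpowers a :=
    (Subgroup.zpowers_le.mpr hzA) (hz' y hy)
  refine ⟨a, hAn, hall, ?_⟩
  by_contra! hcon
  obtain ⟨w, hwa, hw⟩ := hcon
  set A := Subgroup.zpowers a with hAdef
  let C := Subgroup.centralizer (A : Set P)
  have hwC : w ∈ C := by
    rw [Subgroup.mem_centralizer_iff]
    rintro _ ⟨k, rfl⟩
    exact (hwa.zpow_right k).eq.symm
  have hbot : C.map (QuotientGroup.mk' A) ≠ ⊥ := by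
    intro h
    have h1 : QuotientGroup.mk' A w ∈ C.map (QuotientGroup.mk' A) := Subgroup.mem_map_of_mem _ hwC
    rw [h, Subgroup.mem_bot] at h1
    exact hw ((QuotientGroup.eq_one_iff w).mp h1)
  have : (C.map (QuotientGroup.mk' A)).Normal :=
    Subgroup.Normal.map inferInstance _ (QuotientGroup.mk'_surjective A)
  obtain ⟨q, hqC, hqo, hqc⟩ := (hP.to_quotient A).exists_orderOf_eq_mem_center _ hbot
  obtain ⟨x, hxC, rfl⟩ := hqC
  have hxA : x ∉ A := fun h => by
    have : QuotientGroup.mk' A x = 1 := (QuotientGroup.eq_one_iff x).mpr h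
    rw [this, orderOf_one] at hqo
    exact hp.out.one_lt.ne hqo
  have hxp : x ^ p ∈ A := by
    rw [← QuotientGroup.eq_one_iff]
    have := pow_orderOf_eq_one (QuotientGroup.mk' A x)
    rwa [hqo] at this
  have hxa : x * a = a * x :=
    (Subgroup.mem_centralizer_iff.mp hxC a (Subgroup.mem_zpowers a)).symm
  have hor := hP.mem_zpowers_or_mem_zpowers (u := 1) (s := 1) hall hxp
    (by rw [hxa, mul_inv_cancel_right, pow_one]) (by simp) hp.out.not_dvd_one
  have hax : a ∈ Subgroup.zpowers x := hor.resolve_left hxA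
  have hle : A ≤ Subgroup.zpowers x := Subgroup.zpowers_le.mpr hax
  have hnorm : (Subgroup.zpowers x).Normal := by
    refine ⟨?_⟩
    rintro _ ⟨k, rfl⟩ g
    have h1 : g * x * g⁻¹ ∈ Subgroup.zpowers x := by
      have hq := Subgroup.mem_center_iff.mp hqc (QuotientGroup.mk' A g)
      have : x⁻¹ * (g * x * g⁻¹) ∈ A := by
        rw [← QuotientGroup.eq_one_iff]
        change (QuotientGroup.mk' A) _ = 1
        rw [map_mul, map_mul, map_mul, hq, map_inv, map_inv]; group
      exact (Subgroup.mul_mem_cancel_left _ (Subgroup.inv_mem _ (Subgroup.mem_zpowers x))).mp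
        (hle this)
    simp only [← conj_zpow]
    exact Subgroup.zpow_mem _ h1 k
  exact hxA (hmax ⟨hnorm, hle hzA, x, rfl⟩ hle (Subgroup.mem_zpowers x))

theorem IsPGroup.exists_notMem_pow_mem {p : ℕ} [hp : Fact p.Prime] {P : Type*} [Group P]
    [Finite P] (hP : IsPGroup p P) (A : Subgroup P) [A.Normal] (hA : A ≠ ⊤) :
    ∃ x ∉ A, x ^ p ∈ A := by
  have : Nontrivial (P ⧸ A) := QuotientGroup.nontrivial_iff.mpr hA
  obtain ⟨q, -, hq, -⟩ := (hP.to_quotient A).exists_orderOf_eq_mem_center ⊤ top_ne_bot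
  obtain ⟨x, rfl⟩ := QuotientGroup.mk'_surjective A q
  refine ⟨x, fun h => ?_, ?_⟩
  · have : QuotientGroup.mk' A x = 1 := (QuotientGroup.eq_one_iff x).mpr h
    rw [this, orderOf_one] at hq
    exact hp.out.one_lt.ne hq
  · rw [← QuotientGroup.eq_one_iff]
    have := pow_orderOf_eq_one (QuotientGroup.mk' A x)
    rwa [hq] at this

theorem exists_conj_eq_pow {G : Type*} [Group G] [Finite G] (a x : G)
    [h : (Subgroup.zpowers a).Normal] : ∃ u : ℕ, x * a * x⁻¹ = a ^ u := by
  obtain ⟨u, hu⟩ := mem_powers_iff_mem_zpowers.mpr (h.conj_mem a (Subgroup.mem_zpowers a) x)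
  exact ⟨u, hu.symm⟩

theorem conj_pow_eq_pow_pow {G : Type*} [Group G] {a x : G} {u : ℕ}
    (h : x * a * x⁻¹ = a ^ u) (n : ℕ) : x ^ n * a * (x ^ n)⁻¹ = a ^ u ^ n := by
  induction n with
  | zero => simp
  | succ n ih =>
    have : x ^ (n + 1) * a * (x ^ (n + 1))⁻¹ = x * (x ^ n * a * (x ^ n)⁻¹) * x⁻¹ := by
      rw [pow_succ']; group
    rw [this, ih, ← conj_pow, h, ← pow_mul, pow_succ']

theorem modEq_one_of_pow_mem_zpowers {G : Type*} [Group G] [Finite G] {a x : G} {u n : ℕ}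
    (h : x * a * x⁻¹ = a ^ u) (hx : x ^ n ∈ Subgroup.zpowers a) :
    u ^ n ≡ 1 [MOD orderOf a] := by
  rw [← pow_eq_pow_iff_modEq, pow_one, ← conj_pow_eq_pow_pow h]
  obtain ⟨k, hk⟩ := hx
  simp only at hk
  rw [← hk]; group

theorem exists_geom_sum_eq_mul_of_modEq_one {p u : ℕ} (hp : p.Prime) (hodd : Odd p)
    (hu : u ≡ 1 [MOD p]) : ∃ s, ∑ i ∈ Finset.range p, u ^ i = p * s ∧ ¬ p ∣ s := by
  obtain ⟨c, hc⟩ : (p : ℤ) ∣ u - 1 := by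
    have := (Nat.modEq_iff_dvd.mp hu.symm); simpa using this
  have h := odd_sq_dvd_geom_sum₂_sub (R := ℤ) (a := 1) (b := c) hodd
  simp only [one_pow, mul_one] at h
  rw [← hc, add_sub_cancel] at h
  obtain ⟨k, hk⟩ := h
  have hsum : ((∑ i ∈ Finset.range p, u ^ i : ℕ) : ℤ) = p * (1 + p * k) := by
    push_cast; linear_combination hk
  have hdvd : p ∣ ∑ i ∈ Finset.range p, u ^ i := by
    rw [← Int.natCast_dvd_natCast, hsum]; exact dvd_mul_right _ _
  obtain ⟨s, hs⟩ := hdvd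
  refine ⟨s, hs, fun hps => ?_⟩
  have hs' : (s : ℤ) = 1 + p * k := by
    have hp0 : (p : ℤ) ≠ 0 := by exact_mod_cast hp.ne_zero
    apply mul_left_cancel₀ hp0
    rw [← hsum, hs]; push_cast; ring
  have h1 : (p : ℤ) ∣ 1 := by
    have : (p : ℤ) ∣ s := by exact_mod_cast hps
    rw [hs'] at this
    exact (dvd_add_left (dvd_mul_right _ _)).mp this
  exact hp.not_dvd_one (by exact_mod_cast h1)

theorem IsPGroup.isCyclic_of_odd {p : ℕ} [hp : Fact p.Prime] {P : Type*}
    [Group P] [Finite P] (hodd : Odd p) (hP : IsPGroup p P)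
    (hcomm : ∀ x y : P, orderOf x = p → orderOf y = p → Commute x y → y ∈ Subgroup.zpowers x) :
    IsCyclic P := by
  cases subsingleton_or_nontrivial P
  · infer_instance
  obtain ⟨a, hn, hall, hcent⟩ := hP.exists_normal_cyclic_self_centralizing hcomm
  by_cases htop : Subgroup.zpowers a = ⊤
  · exact ⟨a, (Subgroup.eq_top_iff' _).mp htop⟩
  exfalso
  obtain ⟨x, hxA, hxp⟩ := hP.exists_notMem_pow_mem _ htop
  obtain ⟨u, hu⟩ := exists_conj_eq_pow a x
  have ha1 : a ≠ 1 := fun h => hxA (hcent x (h ▸ Commute.one_right x))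
  have hup : u ^ p ≡ 1 [MOD p] :=
    (modEq_one_of_pow_mem_zpowers hu hxp).of_dvd (hP.dvd_orderOf ha1)
  have hu1 : u ≡ 1 [MOD p] := by
    rw [← ZMod.natCast_eq_natCast_iff] at hup ⊢
    rwa [Nat.cast_pow, ZMod.pow_card] at hup
  obtain ⟨s, hs, hps⟩ := exists_geom_sum_eq_mul_of_modEq_one hp.out hodd hu1
  rcases hP.mem_zpowers_or_mem_zpowers hall hxp hu hs hps with h | ⟨k, hk⟩
  · exact hxA h
  · exact hxA (hcent x (hk ▸ (Commute.refl x).zpow_right k))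

theorem eq_of_mem_zpowers_of_orderOf_eq_two {G : Type*} [Group G] {y z : G}
    (hz : orderOf z = 2) (hy : y ∈ Subgroup.zpowers z) (hy1 : y ≠ 1) : y = z := by
  obtain ⟨k, rfl⟩ := hy
  simp only at hy1 ⊢
  have hz2 : z ^ (2 : ℤ) = 1 := by
    have := pow_orderOf_eq_one z
    rw [hz] at this; exact_mod_cast this
  rcases Int.even_or_odd' k with ⟨c, rfl | rfl⟩
  · exact absurd (by rw [zpow_mul, hz2, one_zpow]) hy1
  · rw [zpow_add, zpow_mul, hz2, one_zpow, one_mul, zpow_one]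

/-- A noncyclic `2`-group without a Klein four-subgroup has a cyclic subgroup of index `2` outside
which every element has order `4`. -/
theorem IsPGroup.exists_index_eq_two_of_not_isCyclic {P : Type*} [Group P] [Finite P]
    (hP : IsPGroup 2 P) (hnc : ¬ IsCyclic P)
    (hcomm : ∀ x y : P, orderOf x = 2 → orderOf y = 2 → Commute x y → y ∈ Subgroup.zpowers x) :
    ∃ a : P, (Subgroup.zpowers a).index = 2 ∧ 4 ∣ orderOf a ∧
      ∀ y ∉ Subgroup.zpowers a, orderOf y = 4 := by
  have : Nontrivial P := not_subsingleton_iff_nontrivial.mp fun _ => hnc inferInstance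
  obtain ⟨a, hn, hall, hcent⟩ := hP.exists_normal_cyclic_self_centralizing hcomm
  obtain ⟨z, -, hz, hzc⟩ := hP.exists_orderOf_eq_mem_center ⊤ top_ne_bot
  have huniq (y : P) (hy : orderOf y = 2) : y = z := by
    refine eq_of_mem_zpowers_of_orderOf_eq_two hz
      (hcomm z y hz hy (Subgroup.mem_center_iff.mp hzc y).symm) fun h => ?_
    rw [h, orderOf_one] at hy
    exact absurd hy (by norm_num)
  have hzz : z ^ 2 = 1 := hz ▸ pow_orderOf_eq_one z
  have htop : Subgroup.zpowers a ≠ ⊤ := fun htop => hnc ⟨a, (Subgroup.eq_top_iff' _).mp htop⟩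
  obtain ⟨x₀, hx₀, -⟩ := hP.exists_notMem_pow_mem _ htop
  have ha1 : a ≠ 1 := fun h => hx₀ (hcent x₀ (h ▸ Commute.one_right x₀))
  have h4 : 4 ∣ orderOf a := by
    obtain ⟨k, hk⟩ := IsPGroup.iff_orderOf.mp hP a
    rcases k with _ | _ | k
    · exact absurd (orderOf_eq_one_iff.mp hk) ha1
    · exfalso
      have h2 : orderOf a = 2 := by simpa using hk
      have haz := huniq a h2
      exact hx₀ (hcent x₀ (haz ▸ Subgroup.mem_center_iff.mp hzc x₀))
    · rw [hk, pow_succ, pow_succ, mul_assoc]; exact dvd_mul_left _ _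
  have hinv (x : P) (hxA : x ∉ Subgroup.zpowers a) (hx2 : x ^ 2 ∈ Subgroup.zpowers a) :
      x ^ 2 = z ∧ x * a * x⁻¹ = a⁻¹ := by
    obtain ⟨u, hu⟩ := exists_conj_eq_pow a x
    have hu2 : u ^ 2 ≡ 1 [MOD 4] := (modEq_one_of_pow_mem_zpowers hu hx2).of_dvd h4
    have hu4 : u % 4 = 1 ∨ u % 4 = 3 := by
      rw [Nat.ModEq, Nat.pow_mod] at hu2
      have : u % 4 < 4 := Nat.mod_lt _ (by norm_num)
      interval_cases u % 4 <;> simp_all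
    rcases hu4 with hu4 | hu4
    · exfalso
      rcases hP.mem_zpowers_or_mem_zpowers (s := (1 + u) / 2) hall hx2 hu
        (by simp only [Finset.sum_range_succ, Finset.sum_range_zero, pow_zero, pow_one]; omega)
        (by omega)
        with h | ⟨k, hk⟩
      · exact hxA h
      · exact hxA (hcent x (hk ▸ (Commute.refl x).zpow_right k))
    · have hx21 : x ^ 2 ≠ 1 := fun h => hxA (by
        by_cases h1 : x = 1
        · rw [h1]; exact Subgroup.one_mem _
        · exact hall x (orderOf_eq_prime h h1))
      have hxz : x ^ 2 = z := by
        obtain ⟨t, ht⟩ := mem_powers_iff_mem_zpowers.mpr hx2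
        simp only at ht
        have h1 : (x ^ 2) ^ u = x ^ 2 := by
          rw [← ht, ← pow_mul, mul_comm, pow_mul, ← hu, conj_pow, ht]; group
        have hw : u = 2 * (u / 2) + 1 := by omega
        have h2 : ((x ^ 2) ^ 2) ^ (u / 2) = 1 := by
          rw [hw, pow_succ, pow_mul] at h1
          exact mul_eq_right.mp h1
        have hcop : Nat.Coprime 2 (u / 2) :=
          (Nat.Prime.coprime_iff_not_dvd Nat.prime_two).mpr (by omega)
        have h3 : (x ^ 2) ^ 2 = 1 :=
          (hP.powEquiv hcop).injective (by simpa using h2)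
        exact huniq _ (orderOf_eq_prime h3 hx21)
      refine ⟨hxz, ?_⟩
      by_contra hne
      have hc : a ^ (u + 1) ≠ 1 := fun h => hne (by
        rw [hu]; exact eq_inv_of_mul_eq_one_left (by rw [← pow_succ, h]))
      have hd : 2 ∣ orderOf (a ^ (u + 1)) := hP.dvd_orderOf hc
      set j := orderOf (a ^ (u + 1)) / 2 with hj
      have hcz : (a ^ (u + 1)) ^ j = z :=
        huniq _ (orderOf_pow_orderOf_div (orderOf_pos _).ne' hd)
      have hconj : x * a ^ j * x⁻¹ = (a ^ j) ^ u := by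
        rw [← conj_pow, hu, ← pow_mul, ← pow_mul, mul_comm]
      have hsq : (a ^ j * x) ^ 2 = 1 := by
        rw [mul_pow_of_conj_eq_pow hconj, hxz]
        have : ∑ i ∈ Finset.range 2, u ^ i = u + 1 := by
          simp [Finset.sum_range_succ, add_comm]
        rw [this, ← pow_mul, mul_comm j, pow_mul, hcz, ← pow_two, hzz]
      have hmem : a ^ j * x ∈ Subgroup.zpowers a := by
        by_cases h1 : a ^ j * x = 1
        · rw [h1]; exact Subgroup.one_mem _
        · exact hall _ (orderOf_eq_prime hsq h1)
      exact hxA ((Subgroup.mul_mem_cancel_left _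
        (Subgroup.pow_mem _ (Subgroup.mem_zpowers a) j)).mp hmem)
  have hsq (k : ℕ) : ∀ y : P, y ^ 2 ^ k ∈ Subgroup.zpowers a → y ^ 2 ∈ Subgroup.zpowers a := by
    induction k with
    | zero => intro y hy; rw [pow_zero, pow_one] at hy; exact Subgroup.pow_mem _ hy 2
    | succ k ih =>
      intro y hy
      rw [pow_succ', pow_mul] at hy
      have hy4 := ih (y ^ 2) hy
      by_contra hy2
      obtain ⟨v, hv⟩ := exists_conj_eq_pow a y
      have h1 := (hinv (y ^ 2) hy2 hy4).2
      rw [conj_pow_eq_pow_pow hv 2] at h1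
      have h2 : a ^ (v ^ 2 + 1) = 1 := by rw [pow_succ, h1, inv_mul_cancel]
      have h3 : 4 ∣ v ^ 2 + 1 := h4.trans (orderOf_dvd_of_pow_eq_one h2)
      have h5 : (v ^ 2 + 1) % 4 = 0 := Nat.mod_eq_zero_of_dvd h3
      rw [Nat.add_mod, Nat.pow_mod] at h5
      have : v % 4 < 4 := Nat.mod_lt _ (by norm_num)
      interval_cases v % 4 <;> simp_all
  have hout (y : P) (hy : y ∉ Subgroup.zpowers a) : y ^ 2 = z ∧ y * a * y⁻¹ = a⁻¹ := by
    obtain ⟨k, hk⟩ := IsPGroup.iff_orderOf.mp hP y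
    refine hinv y hy (hsq k y ?_)
    rw [← hk, pow_orderOf_eq_one]; exact Subgroup.one_mem _
  refine ⟨a, ?_, h4, fun y hy => ?_⟩
  · rw [Subgroup.index_eq_two_iff]
    refine ⟨x₀, fun b => ?_⟩
    by_cases hb : b ∈ Subgroup.zpowers a
    · exact Or.inr ⟨hb, fun h => hx₀ ((Subgroup.mul_mem_cancel_left _ hb).mp h)⟩
    · refine Or.inl ⟨hcent _ ?_, hb⟩
      have h1 : b * x₀ * a * (b * x₀)⁻¹ = a := by
        have : b * x₀ * a * (b * x₀)⁻¹ = b * (x₀ * a * x₀⁻¹) * b⁻¹ := by group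
        rw [this, (hout x₀ hx₀).2, ← conj_inv, (hout b hb).2, inv_inv]
      exact mul_inv_eq_iff_eq_mul.mp h1
  · have h2 := (hout y hy).1
    refine orderOf_eq_prime_pow (p := 2) (n := 1) ?_ ?_
    · rw [pow_one, h2]
      exact fun h => by simp [h] at hz
    · rw [show 2 ^ (1 + 1) = 2 * 2 by norm_num, pow_mul, h2, hzz]

theorem IsPGroup.card_orderOf_eq_four {P : Type*} [Group P] [Finite P]
    (hP : IsPGroup 2 P) (hnc : ¬ IsCyclic P)
    (hcomm : ∀ x y : P, orderOf x = 2 → orderOf y = 2 → Commute x y → y ∈ Subgroup.zpowers x) :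
    ∃ n : ℕ, Nat.card P = 2 ^ (n + 3) ∧
      Nat.card {y : P // orderOf y = 4} = 2 ^ (n + 2) + 2 := by
  classical
  obtain ⟨a, hidx, h4, hout⟩ := hP.exists_index_eq_two_of_not_isCyclic hnc hcomm
  have hcard : Nat.card (Subgroup.zpowers a) * 2 = Nat.card P := hidx ▸ Subgroup.card_mul_index _
  obtain ⟨k, hk⟩ := IsPGroup.iff_orderOf.mp hP a
  rw [Nat.card_zpowers] at hcard
  obtain ⟨n, rfl⟩ : ∃ n, k = n + 2 := by
    refine ⟨k - 2, (Nat.sub_add_cancel ?_).symm⟩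
    rw [hk] at h4
    exact (Nat.pow_dvd_pow_iff_le_right (x := 2) (by norm_num)).mp (by simpa using h4)
  have hcardP : Nat.card P = 2 ^ (n + 3) := by rw [← hcard, hk]; ring
  refine ⟨n, hcardP, ?_⟩
  have := Fintype.ofFinite P
  let A := Subgroup.zpowers a
  have hin : Nat.card {y : A // orderOf y = 4} = 2 := by
    have h := IsCyclic.card_orderOf_eq_totient (α := A) (d := 4)
      (by rw [Nat.card_eq_fintype_card.symm, Nat.card_zpowers]; exact h4)
    rw [Nat.card_eq_fintype_card, Fintype.card_subtype, h]; decide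
  have hsplit : Nat.card {y : P // orderOf y = 4} =
      Nat.card {y : A // orderOf y = 4} + Nat.card {y : P // y ∉ A} := by
    rw [← Nat.card_sum]
    refine Nat.card_congr ?_
    refine (Equiv.sumCompl (fun y : {y : P // orderOf y = 4} => (y : P) ∈ A)).symm.trans
      (Equiv.sumCongr ?_ ?_)
    · exact {
        toFun := fun y => ⟨⟨y.1.1, y.2⟩, by rw [Subgroup.orderOf_mk]; exact y.1.2⟩
        invFun := fun y => ⟨⟨y.1.1, by rw [Subgroup.orderOf_coe]; exact y.2⟩, y.1.2⟩
        left_inv := fun _ => rfl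
        right_inv := fun _ => rfl }
    · exact {
        toFun := fun y => ⟨y.1.1, y.2⟩
        invFun := fun y => ⟨⟨y.1, hout y.1 y.2⟩, y.2⟩
        left_inv := fun _ => rfl
        right_inv := fun _ => rfl }
  have hcompl : Nat.card {y : P // y ∉ A} = 2 ^ (n + 2) := by
    have h1 : Nat.card {y : P // y ∈ A} = 2 ^ (n + 2) := by
      rw [← hk, ← Nat.card_zpowers]
    have h2 := Nat.card_congr (Equiv.sumCompl (fun y : P => y ∈ A))
    rw [Nat.card_sum, h1, hcardP] at h2
    have h3 : 2 ^ (n + 3) = 2 * 2 ^ (n + 2) := by ring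
    omega
  rw [hsplit, hin, hcompl, add_comm]

/-- The restriction of an action by endomorphisms to an invariant subgroup. -/
def Subgroup.restrictEnd {H K : Type*} [Group H] [Group K] (ψ : H →* Monoid.End K)
    (W : Subgroup K) (hW : ∀ h, ∀ k ∈ W, ψ h k ∈ W) : H →* Monoid.End W where
  toFun h := ((ψ h).comp W.subtype).codRestrict W fun k => hW h k k.2
  map_one' := MonoidHom.ext fun k => Subtype.ext (DFunLike.congr_fun (map_one ψ) (k : K))
  map_mul' g h := MonoidHom.ext fun k => Subtype.ext (DFunLike.congr_fun (map_mul ψ g h) (k : K))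

theorem prod_end_pow_eq_one {H V : Type*} [Group H] [CommGroup V] (ψ : H →* Monoid.End V)
    (hfree : ∀ h, h ≠ 1 → ∀ v, ψ h v = v → v = 1) {g : H} (hg : g ≠ 1) {n : ℕ}
    (hgn : g ^ n = 1) (v : V) : ∏ i ∈ Finset.range n, ψ (g ^ i) v = 1 := by
  apply hfree g hg
  rw [map_prod]
  have h (i : ℕ) : ψ g (ψ (g ^ i) v) = ψ (g ^ (i + 1)) v := by
    rw [pow_succ', map_mul]; rfl
  simp only [h]
  have h1 := Finset.prod_range_succ (fun i => ψ (g ^ i) v) n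
  rw [Finset.prod_range_succ', hgn, pow_zero] at h1
  exact mul_right_cancel h1

theorem pow_prime_eq_one_of_not_mem_zpowers {H V : Type*} [Group H] [CommGroup V]
    (ψ : H →* Monoid.End V) (hfree : ∀ h, h ≠ 1 → ∀ v, ψ h v = v → v = 1) {p : ℕ}
    (hp : p.Prime) {x y : H} (hx : orderOf x = p) (hy : orderOf y = p) (hxy : Commute x y)
    (hmem : y ∉ Subgroup.zpowers x) (v : V) : v ^ p = 1 := by
  have hxp : x ^ p = 1 := hx ▸ pow_orderOf_eq_one x
  have hyp : y ^ p = 1 := hy ▸ pow_orderOf_eq_one y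
  have hpow (i : ℕ) (hi : i ∈ Finset.range p) (hi0 : i ≠ 0) (g : H) (hg : orderOf g = p) :
      p.Coprime i ∧ g ^ i ≠ 1 := by
    have hni : ¬ p ∣ i := Nat.not_dvd_of_pos_of_lt (Nat.pos_of_ne_zero hi0)
      (Finset.mem_range.mp hi)
    exact ⟨(Nat.Prime.coprime_iff_not_dvd hp).mpr hni,
      fun h => hni (hg ▸ orderOf_dvd_of_pow_eq_one h)⟩
  have hne (j : ℕ) (hj : j ∈ Finset.range p) : x * y ^ j ≠ 1 := by
    intro h
    by_cases hj0 : j = 0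
    · rw [hj0, pow_zero, mul_one] at h
      rw [h, orderOf_one] at hx
      exact hp.one_lt.ne hx
    · obtain ⟨hc, -⟩ := hpow j hj hj0 y hy
      obtain ⟨m, hm⟩ := exists_pow_eq_self_of_coprime (x := y) (n := j) (hy ▸ hc.symm)
      refine hmem ?_
      rw [← hm, eq_inv_of_mul_eq_one_right h]
      exact Subgroup.pow_mem _ (Subgroup.inv_mem _ (Subgroup.mem_zpowers x)) m
  have h1 : ∏ j ∈ Finset.range p, ∏ i ∈ Finset.range p, ψ ((x * y ^ j) ^ i) v = 1 := by
    refine Finset.prod_eq_one fun j hj => prod_end_pow_eq_one ψ hfree (hne j hj) ?_ v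
    rw [(hxy.pow_right j).mul_pow, hxp, ← pow_mul, mul_comm, pow_mul, hyp, one_pow, one_mul]
  rw [Finset.prod_comm, Finset.prod_eq_single_of_mem 0 (Finset.mem_range.mpr hp.pos)] at h1
  · simpa using h1
  · intro i hi hi0
    have h2 (j : ℕ) : ψ ((x * y ^ j) ^ i) v = ψ (x ^ i) (ψ ((y ^ i) ^ j) v) := by
      rw [(hxy.pow_right j).mul_pow, ← pow_mul, mul_comm j, pow_mul, map_mul]; rfl
    simp only [h2]
    rw [← map_prod, prod_end_pow_eq_one ψ hfree (hpow i hi hi0 y hy).2, map_one]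
    rw [← pow_mul, mul_comm, pow_mul, hyp, one_pow]

theorem IsPGroup.mem_zpowers_of_fixedPointFree {p : ℕ} [hp : Fact p.Prime] {P K : Type*}
    [Group P] [Finite P] [Group K] [Finite K] [Nontrivial K] [MulDistribMulAction P K]
    (hP : IsPGroup p P) (hfree : ∀ g : P, g ≠ 1 → ∀ k : K, g • k = k → k = 1) (x y : P)
    (hx : orderOf x = p) (hy : orderOf y = p) (hxy : Commute x y) :
    y ∈ Subgroup.zpowers x := by
  by_contra hmem
  have hx1 : x ≠ 1 := fun h => hp.out.one_lt.ne (by rw [← hx, h, orderOf_one])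
  have hpK : ¬ p ∣ Nat.card K := by
    have h := hP.card_modEq_card_fixedPoints K
    have hfix : MulAction.fixedPoints P K = {1} := by
      ext k
      exact ⟨fun hk => hfree x hx1 k (hk x), fun hk g => by
        rw [Set.mem_singleton_iff.mp hk, smul_one]⟩
    rw [hfix, Nat.card_coe_set_eq, Set.ncard_singleton] at h
    intro hd
    exact hp.out.not_dvd_one ((h.dvd_iff dvd_rfl).mp hd)
  obtain ⟨q, hq, hqK⟩ := Nat.exists_prime_and_dvd (Finite.one_lt_card (α := K)).ne'
  have : Fact q.Prime := ⟨hq⟩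
  have hsyl : ¬ p ∣ Nat.card (Sylow q K) := fun h =>
    hpK (h.trans (((default : Sylow q K).card_dvd_index).trans (Subgroup.index_dvd_card _)))
  obtain ⟨Q, hQ⟩ := hP.nonempty_fixed_point_of_prime_not_dvd_card (Sylow q K) hsyl
  have hQmem (g : P) (k : K) (hk : k ∈ Q) : g • k ∈ Q := by
    have h := Subgroup.smul_mem_pointwise_smul k g (Q : Subgroup K) hk
    rwa [← Sylow.pointwise_smul_def, hQ g] at h
  let W : Subgroup K := (Q : Subgroup K) ⊓ Subgroup.centralizer (Q : Set K)
  have hW (g : P) (k : K) (hk : k ∈ W) : g • k ∈ W := by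
    refine ⟨hQmem g k hk.1, Subgroup.mem_centralizer_iff.mpr fun b hb => ?_⟩
    have h1 := Subgroup.mem_centralizer_iff.mp hk.2 (g⁻¹ • b) (hQmem g⁻¹ b hb)
    have h2 := congrArg (g • ·) h1
    simpa [smul_mul'] using h2
  let _ : CommGroup W :=
    { (inferInstance : Group W) with
      mul_comm := fun a b => Subtype.ext (Subgroup.mem_centralizer_iff.mp b.2.2 a a.2.1) }
  have hpow := pow_prime_eq_one_of_not_mem_zpowers
    (Subgroup.restrictEnd (MulDistribMulAction.toMonoidEnd P K) W hW)
    (fun h hh v hv => Subtype.ext (hfree h hh v (congrArg Subtype.val hv))) hp.out hx hy hxy hmem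
  have hQbot : (Q : Subgroup K) ≠ ⊥ := Q.ne_bot_of_dvd_card hqK
  obtain ⟨w, hw, hwc⟩ : ∃ w : Q, orderOf w = q ∧ w ∈ Subgroup.center Q := by
    have : Nontrivial Q := (Subgroup.nontrivial_iff_ne_bot _).mpr hQbot
    obtain ⟨w, -, h⟩ := Q.2.exists_orderOf_eq_mem_center ⊤ top_ne_bot
    exact ⟨w, h⟩
  have hwW : (w : K) ∈ W := ⟨w.2, Subgroup.mem_centralizer_iff.mpr fun b hb =>
    congrArg Subtype.val (Subgroup.mem_center_iff.mp hwc ⟨b, hb⟩)⟩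
  have hwp : (w : K) ^ p = 1 := congrArg Subtype.val (hpow ⟨w, hwW⟩)
  have hqp : q ∣ p := by
    rw [← hw, ← Subgroup.orderOf_coe]; exact orderOf_dvd_of_pow_eq_one hwp
  exact hpK (((Nat.prime_dvd_prime_iff_eq hq hp.out).mp hqp) ▸ hqK)

theorem sq_card_center_add_one_le_card {H V : Type*} [Group H] [Finite H] [AddCommGroup V]
    [Finite V] [Nontrivial V] (ψ : H →* AddMonoid.End V)
    (hfree : ∀ h, h ≠ 1 → ∀ v, ψ h v = v → v = 0)
    (htrans : ∀ v w : V, v ≠ 0 → w ≠ 0 → ∃ h, ψ h v = w)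
    (hcomm : ¬ ∀ g h : H, g * h = h * g) :
    (Nat.card (Subgroup.center H) + 1) ^ 2 ≤ Nat.card V := by
  classical
  obtain ⟨v, hv⟩ := exists_ne (0 : V)
  have hmul (g h : H) (w : V) : ψ (g * h) w = ψ g (ψ h w) := by rw [map_mul]; rfl
  have hone (w : V) : ψ 1 w = w := by rw [map_one]; rfl
  have hne0 (g : H) : ψ g v ≠ 0 := fun h => hv (by
    rw [← hone v, ← inv_mul_cancel g, hmul, h, map_zero])
  have heq (g h : H) (hgh : ψ g v = ψ h v) : g = h := by
    by_contra hne
    refine hv (hfree (h⁻¹ * g) (fun h1 => hne (inv_mul_eq_one.mp h1).symm) v ?_)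
    rw [hmul, hgh, ← hmul, inv_mul_cancel, hone]
  let F : Subring (AddMonoid.End V) := Subring.centralizer (Set.range ψ)
  have hF (f : F) (h : H) (w : V) : ψ h (f.1 w) = f.1 (ψ h w) :=
    DFunLike.congr_fun (Subring.mem_centralizer_iff.mp f.2 _ ⟨h, rfl⟩) w
  have hker (f : F) (w : V) (hw : w ≠ 0) (hfw : f.1 w = 0) : f = 0 := by
    refine Subtype.ext (AddMonoidHom.ext fun w' => ?_)
    by_cases hw' : w' = 0
    · rw [hw']; exact map_zero f.1
    · obtain ⟨h, rfl⟩ := htrans w w' hw hw'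
      exact (hF f h w).symm.trans (by rw [hfw, map_zero]; rfl)
  have : Finite (AddMonoid.End V) := DFunLike.finite _
  have : Nontrivial F := ⟨0, 1, fun h => hv (DFunLike.congr_fun (congrArg Subtype.val h) v).symm⟩
  have : NoZeroDivisors F := ⟨fun {f g} hfg => by
    by_contra! hne
    have hgv : g.1 v ≠ 0 := fun h => hne.2 (hker g v hv h)
    exact hne.1 (hker f _ hgv (DFunLike.congr_fun (congrArg Subtype.val hfg) v))⟩
  have : IsDomain F := NoZeroDivisors.to_isDomain F
  have hfield : IsField F := Finite.isDomain_to_isField F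
  have hcard : Nat.card (Subgroup.center H) + 1 ≤ Nat.card F := by
    rw [← Finite.card_option]
    have hz (z : Subgroup.center H) : ψ z ∈ F := by
      rw [Subring.mem_centralizer_iff]
      rintro _ ⟨h, rfl⟩
      rw [← map_mul, ← map_mul, Subgroup.mem_center_iff.mp z.2 h]
    refine Nat.card_le_card_of_injective
      (fun o : Option (Subgroup.center H) => o.elim (0 : F) fun z => ⟨ψ z, hz z⟩) ?_
    rintro (_ | z) (_ | z') h
    · rfl
    · exact absurd (DFunLike.congr_fun (congrArg Subtype.val h) v).symm (hne0 z')
    · exact absurd (DFunLike.congr_fun (congrArg Subtype.val h) v) (hne0 z)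
    · exact congrArg some (Subtype.ext (heq _ _ (DFunLike.congr_fun (congrArg Subtype.val h) v)))
  obtain ⟨w, hw⟩ : ∃ w : V, ∀ f : F, f.1 v ≠ w := by
    by_contra! hsurj
    refine hcomm fun g h => ?_
    obtain ⟨a, ha⟩ := hsurj (ψ g v)
    obtain ⟨b, hb⟩ := hsurj (ψ h v)
    apply heq
    rw [hmul, hmul, ← hb, ← ha, hF, hF, ← ha, ← hb]
    exact DFunLike.congr_fun (congrArg Subtype.val (hfield.mul_comm b a)) v
  calc (Nat.card (Subgroup.center H) + 1) ^ 2 ≤ Nat.card F ^ 2 := Nat.pow_le_pow_left hcard 2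
    _ = Nat.card (F × F) := by rw [Nat.card_prod, sq]
    _ ≤ Nat.card V := by
      refine Nat.card_le_card_of_injective (fun fg => fg.1.1 v + fg.2.1 w) ?_
      have key (f g : F) (h : f.1 v + g.1 w = 0) : f = 0 ∧ g = 0 := by
        have hg : g = 0 := by
          by_contra hg
          obtain ⟨g', hg'⟩ := hfield.mul_inv_cancel hg
          rw [hfield.mul_comm] at hg'
          refine hw (-(g' * f)) ?_
          have h1 : g'.1 (g.1 w) = w := DFunLike.congr_fun (congrArg Subtype.val hg') w
          have h2 := congrArg g'.1 h
          rw [map_add, h1, map_zero] at h2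
          exact neg_eq_of_add_eq_zero_right h2
        refine ⟨hker f v hv ?_, hg⟩
        rw [hg] at h
        simpa using h
      rintro ⟨f, g⟩ ⟨f', g'⟩ h
      have h1 := key (f - f') (g - g') (by
        change (f.1 v - f'.1 v) + (g.1 w - g'.1 w) = 0
        have h : f.1 v + g.1 w = f'.1 v + g'.1 w := h
        rw [sub_add_sub_comm, h, sub_self])
      exact Prod.ext (sub_eq_zero.mp h1.1) (sub_eq_zero.mp h1.2)

theorem card_dvd_card_subtype_of_fixedPointFree {H K : Type*} [Group H] [Group K]
    (ψ : H →* Monoid.End K) (hfree : ∀ h, h ≠ 1 → ∀ k, ψ h k = k → k = 1)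
    (s : K → Prop) (hs : ∀ h k, s k → s (ψ h k)) (h1 : ¬ s 1) :
    Nat.card H ∣ Nat.card {k // s k} := by
  let _ : MulAction H {k // s k} :=
    { smul := fun h k => ⟨ψ h k, hs h k k.2⟩
      one_smul := fun k => Subtype.ext (DFunLike.congr_fun (map_one ψ) (k : K))
      mul_smul := fun g h k => Subtype.ext (DFunLike.congr_fun (map_mul ψ g h) (k : K)) }
  have hstab (k : {k // s k}) : MulAction.stabilizer H k = ⊥ := by
    rw [eq_bot_iff]
    intro h hh
    by_contra hne
    have hk : (k : K) = 1 := hfree h hne k (congrArg Subtype.val hh)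
    exact h1 (hk ▸ k.2)
  rw [Nat.card_congr (MulAction.selfEquivOrbitsQuotientProd hstab), Nat.card_prod]
  exact dvd_mul_left _ _

theorem orderCount_mul_of_coprime {K : Type*} [CommGroup K] {m n : ℕ} (hm : 0 < m) (hn : 0 < n)
    (h : m.Coprime n) : orderCount K (m * n) = orderCount K m * orderCount K n := by
  rw [orderCount, orderCount, orderCount, ← Nat.card_prod]
  symm
  refine Nat.card_congr (Equiv.ofBijective
    (fun ab : {a : K // orderOf a = m} × {b : K // orderOf b = n} => ⟨ab.1.1 * ab.2.1, by
      rw [(Commute.all _ _).orderOf_mul_eq_mul_orderOf_of_coprime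
        (by rw [ab.1.2, ab.2.2]; exact h), ab.1.2, ab.2.2]⟩) ⟨?_, ?_⟩)
  · rintro ⟨⟨a, ha⟩, b, hb⟩ ⟨⟨a', ha'⟩, b', hb'⟩ heq
    have heq : a * b = a' * b' := congrArg Subtype.val heq
    have ham : a ^ m = 1 := ha ▸ pow_orderOf_eq_one a
    have ham' : a' ^ m = 1 := ha' ▸ pow_orderOf_eq_one a'
    have hbn : b ^ n = 1 := hb ▸ pow_orderOf_eq_one b
    have hbn' : b' ^ n = 1 := hb' ▸ pow_orderOf_eq_one b'
    have hc : a / a' = b' / b := by rw [div_eq_div_iff_mul_eq_mul, heq, mul_comm]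
    have h1 : a / a' = 1 := by
      rw [← orderOf_eq_one_iff]
      refine Nat.eq_one_of_dvd_coprimes h (orderOf_dvd_of_pow_eq_one ?_)
        (orderOf_dvd_of_pow_eq_one ?_)
      · rw [div_pow, ham, ham', div_one]
      · rw [hc, div_pow, hbn, hbn', div_one]
    have haa : a = a' := div_eq_one.mp h1
    have hbb : b = b' := by rw [haa] at heq; exact mul_left_cancel heq
    subst haa hbb
    rfl
  · rintro ⟨g, hg⟩
    have hgmn : g ^ (m * n) = 1 := hg ▸ pow_orderOf_eq_one g
    have hbez := Nat.gcd_eq_gcd_ab m n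
    rw [h, Nat.cast_one] at hbez
    set a := (g ^ n) ^ Nat.gcdB m n
    set b := (g ^ m) ^ Nat.gcdA m n
    have hab : a * b = g := by
      simp only [a, b]
      rw [← zpow_natCast g n, ← zpow_natCast g m, ← zpow_mul, ← zpow_mul, ← zpow_add, add_comm,
        ← hbez, zpow_one]
    have ha : orderOf a ∣ m := by
      rw [orderOf_dvd_iff_pow_eq_one, ← zpow_natCast, zpow_comm, zpow_natCast, ← pow_mul,
        mul_comm n, hgmn, one_zpow]
    have hb : orderOf b ∣ n := by
      rw [orderOf_dvd_iff_pow_eq_one, ← zpow_natCast, zpow_comm, zpow_natCast, ← pow_mul,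
        hgmn, one_zpow]
    have hprod : orderOf a * orderOf b = m * n := by
      rw [← (Commute.all a b).orderOf_mul_eq_mul_orderOf_of_coprime
        (Nat.Coprime.of_dvd ha hb h), hab, hg]
    have ham : orderOf a = m := by
      refine (Nat.le_of_dvd hm ha).antisymm ?_
      have := Nat.mul_le_mul_left (orderOf a) (Nat.le_of_dvd hn hb)
      exact Nat.le_of_mul_le_mul_right (hprod ▸ this) hn
    have hbn : orderOf b = n := by
      rw [ham] at hprod; exact Nat.eq_of_mul_eq_mul_left hm hprod
    exact ⟨⟨⟨a, ham⟩, b, hbn⟩, Subtype.ext hab⟩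

theorem Sylow.mem_center_of_forall_commute {H : Type*} [Group H] [Finite H]
    [Group.IsNilpotent H] {p : ℕ} [hp : Fact p.Prime] (P : Sylow p H) {x : H} (hx : x ∈ P)
    (hcomm : ∀ y ∈ P, Commute x y) : x ∈ Subgroup.center H := by
  let C := Subgroup.centralizer {x}
  have hall (q : ℕ) (hq : q.Prime) : ∃ Q : Sylow q H, (Q : Subgroup H) ≤ C := by
    have : Fact q.Prime := ⟨hq⟩
    by_cases hpq : p = q
    · subst hpq
      exact ⟨P, fun y hy => Subgroup.mem_centralizer_singleton_iff.mpr (hcomm y hy).symm⟩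
    · let Q : Sylow q H := default
      refine ⟨Q, fun y hy => Subgroup.mem_centralizer_singleton_iff.mpr ?_⟩
      exact (Subgroup.commute_of_normal_of_disjoint (P : Subgroup H) Q inferInstance inferInstance
        (IsPGroup.disjoint_of_ne p q hpq _ _ P.2 Q.2) x y hx hy).symm
  have hdvd : Nat.card H ∣ Nat.card C := by
    rw [Nat.dvd_iff_prime_pow_dvd_dvd]
    intro q k hq hk
    have : Fact q.Prime := ⟨hq⟩
    obtain ⟨Q, hQ⟩ := hall q hq
    exact (Q.pow_dvd_card_of_pow_dvd_card hk).trans (Subgroup.card_dvd_of_le hQ)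
  have htop : C = ⊤ :=
    Subgroup.eq_top_of_card_eq _ (Nat.dvd_antisymm (Subgroup.card_subgroup_dvd_card C) hdvd)
  rw [Subgroup.mem_center_iff]
  exact fun g => Subgroup.mem_centralizer_singleton_iff.mp ((Subgroup.eq_top_iff' C).mp htop g)

theorem orderCount_eq_orderCount_sylow {H : Type*} [Group H] [Finite H] {p : ℕ}
    [hp : Fact p.Prime] (P : Sylow p H) [(P : Subgroup H).Normal] (k : ℕ) :
    orderCount H (p ^ k) = orderCount P (p ^ k) := by
  have hmem (g : H) (hg : orderOf g = p ^ k) : g ∈ P := by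
    have hpg : IsPGroup p (Subgroup.zpowers g) := IsPGroup.of_card (by rw [Nat.card_zpowers, hg])
    obtain ⟨Q, hQ⟩ := hpg.exists_le_sylow
    have := P.unique_of_normal inferInstance
    rw [Subsingleton.elim P Q]
    exact hQ (Subgroup.mem_zpowers g)
  exact Nat.card_congr
    { toFun := fun g => ⟨⟨g.1, hmem g.1 g.2⟩, by rw [Subgroup.orderOf_mk]; exact g.2⟩
      invFun := fun g => ⟨g.1.1, by rw [Subgroup.orderOf_coe]; exact g.2⟩
      left_inv := fun _ => rfl
      right_inv := fun _ => rfl }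

theorem two_mul_dvd_card_center {H : Type*} [Group H] [Finite H] [Group.IsNilpotent H] {m : ℕ}
    (hm : Odd m) (h2m : 2 * m ∣ Nat.card H)
    (hcyc : ∀ p : ℕ, p.Prime → p ≠ 2 → ∀ P : Sylow p H, IsCyclic P) :
    2 * m ∣ Nat.card (Subgroup.center H) := by
  have h2 : Nat.Coprime 2 m := Nat.coprime_two_left.mpr hm
  refine h2.mul_dvd_of_dvd_of_dvd ?_ ?_
  · have : Fact (Nat.Prime 2) := ⟨Nat.prime_two⟩
    let Q : Sylow 2 H := default
    have : Nontrivial Q := (Subgroup.nontrivial_iff_ne_bot _).mpr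
      (Q.ne_bot_of_dvd_card ((dvd_mul_right 2 m).trans h2m))
    obtain ⟨z, -, hz, hzc⟩ := Q.2.exists_orderOf_eq_mem_center ⊤ top_ne_bot
    have hzH : (z : H) ∈ Subgroup.center H := Q.mem_center_of_forall_commute z.2 fun y hy =>
      (congrArg Subtype.val (Subgroup.mem_center_iff.mp hzc ⟨y, hy⟩)).symm
    have h := orderOf_dvd_natCard (⟨z, hzH⟩ : Subgroup.center H)
    rwa [Subgroup.orderOf_mk, Subgroup.orderOf_coe, hz] at h
  · rw [Nat.dvd_iff_prime_pow_dvd_dvd]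
    intro q k hq hk
    have : Fact q.Prime := ⟨hq⟩
    rcases Nat.eq_zero_or_pos k with rfl | hk0
    · exact one_dvd _
    let Q : Sylow q H := default
    have hq2 : q ≠ 2 := by
      rintro rfl
      exact (Nat.not_even_iff_odd.mpr hm) (even_iff_two_dvd.mpr ((dvd_pow_self 2 hk0.ne').trans hk))
    have hQ : (Q : Subgroup H) ≤ Subgroup.center H := fun x hx =>
      Q.mem_center_of_forall_commute hx fun y hy => by
        have := hcyc q hq hq2 Q
        let _ : CommGroup Q := IsCyclic.commGroup
        exact congrArg Subtype.val (mul_comm (⟨x, hx⟩ : Q) ⟨y, hy⟩)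
    exact (Q.pow_dvd_card_of_pow_dvd_card ((hk.trans (dvd_mul_left m 2)).trans h2m)).trans
      (Subgroup.card_dvd_of_le hQ)

theorem Monoid.End.inv_apply_apply {H K : Type*} [Group H] [Monoid K] (ψ : H →* Monoid.End K)
    (h : H) (k : K) : ψ h⁻¹ (ψ h k) = k := by
  have := DFunLike.congr_fun (map_mul ψ h⁻¹ h) k
  rw [inv_mul_cancel, map_one] at this
  exact this.symm

theorem card_dvd_orderCount_of_fixedPointFree {H K : Type*} [Group H] [Group K]
    (ψ : H →* Monoid.End K) (hfree : ∀ h, h ≠ 1 → ∀ k, ψ h k = k → k = 1) {n : ℕ} (hn : 1 < n) :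
    Nat.card H ∣ orderCount K n := by
  refine card_dvd_card_subtype_of_fixedPointFree ψ hfree (fun k => orderOf k = n) ?_ ?_
  · intro h k hk
    have hinj : Function.Injective (ψ h) := Function.LeftInverse.injective (g := ψ h⁻¹)
      (Monoid.End.inv_apply_apply ψ h)
    rw [← hk]
    exact orderOf_injective (ψ h) hinj k
  · rw [orderOf_one]
    exact hn.ne

theorem orderCount_pos_of_prime_dvd {K : Type*} [Group K] [Finite K] {p : ℕ} (hp : p.Prime)
    (h : p ∣ Nat.card K) : 0 < orderCount K p := by
  have : Fact p.Prime := ⟨hp⟩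
  obtain ⟨x, hx⟩ := exists_prime_orderOf_dvd_card' p h
  have : Nonempty {g : K // orderOf g = p} := ⟨⟨x, hx⟩⟩
  exact Nat.card_pos

theorem card_eq_prime_pow_of_fixedPointFree {H K : Type*} [Group H] [Nontrivial H] [Finite H]
    [CommGroup K] [Finite K] [Nontrivial K] (ψ : H →* Monoid.End K)
    (hfree : ∀ h, h ≠ 1 → ∀ k, ψ h k = k → k = 1) (hcop : (Nat.card K).Coprime (Nat.card H))
    (hdvd : ∀ n, 1 < n → n.Coprime (Nat.card H) →
      orderCount K n = 0 ∨ orderCount K n ∣ Nat.card K * Nat.card H) :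
    ∃ p e : ℕ, p.Prime ∧ p ∣ Nat.card K ∧ Nat.card K = p ^ e := by
  obtain ⟨p, hp, hpK⟩ := Nat.exists_prime_and_dvd (Finite.one_lt_card (α := K)).ne'
  refine ⟨p, _, hp, hpK, Nat.eq_prime_pow_of_unique_prime_dvd Nat.card_pos.ne' ?_⟩
  intro q hq hqK
  by_contra hqp
  have hpq : p.Coprime q := (Nat.coprime_primes hp hq).mpr (Ne.symm hqp)
  have hmul := orderCount_mul_of_coprime (K := K) hp.pos hq.pos hpq
  have hpos : orderCount K (p * q) ≠ 0 := hmul ▸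
    (Nat.mul_pos (orderCount_pos_of_prime_dvd hp hpK) (orderCount_pos_of_prime_dvd hq hqK)).ne'
  have h1 := (hdvd (p * q) (one_lt_mul'' hp.one_lt hq.one_lt)
    (Nat.Coprime.of_dvd_left (hpq.mul_dvd_of_dvd_of_dvd hpK hqK) hcop)).resolve_left hpos
  have h2 : Nat.card H * Nat.card H ∣ Nat.card K * Nat.card H :=
    (mul_dvd_mul (card_dvd_orderCount_of_fixedPointFree ψ hfree hp.one_lt)
      (card_dvd_orderCount_of_fixedPointFree ψ hfree hq.one_lt)).trans (hmul ▸ h1)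
  have h3 : Nat.card H ∣ Nat.card K := Nat.dvd_of_mul_dvd_mul_right Nat.card_pos h2
  exact (Finite.one_lt_card (α := H)).ne' (Nat.eq_one_of_dvd_coprimes hcop h3 dvd_rfl)

theorem card_ker_powMonoidHom {K : Type*} [CommGroup K] [Finite K] {p : ℕ} (hp : p.Prime) :
    Nat.card (powMonoidHom p : K →* K).ker = orderCount K p + 1 := by
  have : Fact p.Prime := ⟨hp⟩
  let V := (powMonoidHom p : K →* K).ker
  have hmem (k : K) : k ∈ V ↔ k = 1 ∨ orderOf k = p := by
    rw [MonoidHom.mem_ker, powMonoidHom_apply, ← orderOf_dvd_iff_pow_eq_one, Nat.dvd_prime hp,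
      orderOf_eq_one_iff]
  have hset : (V : Set K) = insert 1 {k | orderOf k = p} := Set.ext fun k => hmem k
  have h1 : (1 : K) ∉ {k : K | orderOf k = p} := fun h => hp.one_lt.ne (orderOf_one.symm.trans h)
  change Nat.card (V : Set K) = Nat.card {k : K | orderOf k = p} + 1
  rw [Nat.card_coe_set_eq, Nat.card_coe_set_eq, hset, Set.ncard_insert_of_notMem h1]

theorem sq_card_center_add_one_le_card_add_one {H K : Type*} [Group H] [Finite H]
    [CommGroup K] [Finite K] [Nontrivial K] (ψ : H →* Monoid.End K)
    (hfree : ∀ h, h ≠ 1 → ∀ k, ψ h k = k → k = 1) (hcop : (Nat.card K).Coprime (Nat.card H))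
    (hdvd : ∀ n, 1 < n → n.Coprime (Nat.card H) →
      orderCount K n = 0 ∨ orderCount K n ∣ Nat.card K * Nat.card H)
    (hcomm : ¬ ∀ g h : H, g * h = h * g) :
    (Nat.card (Subgroup.center H) + 1) ^ 2 ≤ Nat.card H + 1 := by
  have : Nontrivial H := by
    by_contra h
    rw [not_nontrivial_iff_subsingleton] at h
    exact hcomm fun _ _ => Subsingleton.elim _ _
  obtain ⟨p, e, hp, hpK, he⟩ := card_eq_prime_pow_of_fixedPointFree ψ hfree hcop hdvd
  have : Fact p.Prime := ⟨hp⟩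
  let V := (powMonoidHom p : K →* K).ker
  have hV : Nat.card V = orderCount K p + 1 := card_ker_powMonoidHom hp
  have hpV : p ∣ Nat.card V := by
    obtain ⟨x, hx⟩ := exists_prime_orderOf_dvd_card' p hpK
    have hxV : x ∈ V := by
      rw [MonoidHom.mem_ker, powMonoidHom_apply, ← hx, pow_orderOf_eq_one]
    have h := orderOf_dvd_natCard (⟨x, hxV⟩ : V)
    rwa [Subgroup.orderOf_mk, hx] at h
  have hpo : ¬ p ∣ orderCount K p := fun h =>
    hp.one_lt.ne' (Nat.dvd_one.mp ((Nat.dvd_add_right h).mp (hV ▸ hpV)))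
  have ho : orderCount K p = Nat.card H := by
    refine Nat.dvd_antisymm ?_ (card_dvd_orderCount_of_fixedPointFree ψ hfree hp.one_lt)
    refine Nat.Coprime.dvd_of_dvd_mul_left ?_ ((hdvd p hp.one_lt
      (Nat.Coprime.of_dvd_left hpK hcop)).resolve_left (orderCount_pos_of_prime_dvd hp hpK).ne')
    rw [he]
    exact (((Nat.Prime.coprime_iff_not_dvd hp).mpr hpo).pow_left e).symm
  have hW (h : H) (k : K) (hk : k ∈ V) : ψ h k ∈ V := by
    rw [MonoidHom.mem_ker, powMonoidHom_apply] at hk ⊢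
    rw [← map_pow, hk, map_one]
  let ρ := Subgroup.restrictEnd ψ V hW
  have hρfree (h : H) (hh : h ≠ 1) (v : V) (hv : ρ h v = v) : v = 1 :=
    Subtype.ext (hfree h hh v (congrArg Subtype.val hv))
  have hinv (g : H) (v : V) : ρ g⁻¹ (ρ g v) = v := Monoid.End.inv_apply_apply ρ g v
  have hcard : Nat.card {v : V // v ≠ 1} = Nat.card H := by
    have h := Set.ncard_add_ncard_compl ({1} : Set V)
    rw [Set.ncard_singleton, hV, ho, add_comm] at h
    exact (Nat.card_coe_set_eq ({1}ᶜ : Set V)).trans (Nat.add_right_cancel h)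
  have htrans (v w : V) (hv : v ≠ 1) (hw : w ≠ 1) : ∃ h, ρ h v = w := by
    let f : H → {v : V // v ≠ 1} := fun h => ⟨ρ h v, fun h1 => hv (by
      rw [← hinv h v, h1, map_one])⟩
    have hf : Function.Injective f := by
      intro g h hgh
      have hgh : ρ g v = ρ h v := congrArg Subtype.val hgh
      by_contra hne
      refine hv (hρfree (h⁻¹ * g) (fun h1 => hne (inv_mul_eq_one.mp h1).symm) v ?_)
      rw [map_mul]
      exact (congrArg (ρ h⁻¹) hgh).trans (hinv h v)
    obtain ⟨h, hh⟩ := (hf.bijective_of_nat_card_le hcard.le).2 ⟨w, hw⟩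
    exact ⟨h, congrArg Subtype.val hh⟩
  have : Nontrivial V := by
    rw [← Finite.one_lt_card_iff_nontrivial, hV]
    have := orderCount_pos_of_prime_dvd hp hpK
    lia
  have h := sq_card_center_add_one_le_card (V := Additive V)
    ((monoidEndToAdditive V).toMonoidHom.comp ρ) hρfree htrans hcomm
  rw [← ho, ← hV]
  exact h

namespace IsFrobeniusWith

variable {G : Type*} [Group G] {K H : Subgroup G}

theorem normal (h : IsFrobeniusWith K H) : K.Normal := h.2.2.1

/-- The action of a Frobenius complement on the Frobenius kernel by conjugation. -/
noncomputable def conjAction (h : IsFrobeniusWith K H) : H →* MulAut K :=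
  have := h.normal
  (MulAut.conjNormal (H := K)).comp H.subtype

/-- The conjugation action of a Frobenius complement, as endomorphisms of the kernel. -/
noncomputable def conjEnd (h : IsFrobeniusWith K H) : H →* Monoid.End K :=
  (MulDistribMulAction.toMonoidEnd (MulAut K) K).comp h.conjAction

theorem coe_conjAction (hF : IsFrobeniusWith K H) (h : H) (k : K) :
    (hF.conjAction h k : G) = h * k * (h : G)⁻¹ := by
  have := hF.normal
  exact MulAut.conjNormal_apply (H := K) (h : G) k

theorem eq_one_of_conjAction_eq (hF : IsFrobeniusWith K H) (h : H) (hh : h ≠ 1) (k : K)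
    (hk : hF.conjAction h k = k) : k = 1 := by
  by_contra hne
  refine hF.2.2.2.2.2 h h.2 (fun h1 => hh (Subtype.ext h1)) k k.2
    (fun h1 => hne (Subtype.ext h1)) ?_
  rw [← hF.coe_conjAction, hk]

theorem orderOf_mul [Finite G] (hF : IsFrobeniusWith K H) (k : K) (h : H) (hh : h ≠ 1) :
    orderOf (k * h : G) = orderOf h := by
  have hfree : MonoidHom.FixedPointFree (hF.conjAction h) := hF.eq_one_of_conjAction_eq h hh
  obtain ⟨c, hc⟩ := hfree.commutatorMap_surjective k
  have hconj : (k * h : G) = c * h * (c : G)⁻¹ := by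
    rw [← hc, MonoidHom.commutatorMap_apply, Subgroup.coe_div, hF.coe_conjAction, div_eq_mul_inv]
    group
  rw [hconj, ← Subgroup.orderOf_coe h]
  exact orderOf_injective (MulAut.conj (c : G)).toMonoidHom (MulAut.conj (c : G)).injective h

theorem bijective_mul (hF : IsFrobeniusWith K H) :
    Function.Bijective (fun x : K × H => (x.1 * x.2 : G)) := by
  refine ⟨?_, fun g => ?_⟩
  · exact Subgroup.mul_injective_of_disjoint (disjoint_iff.mpr hF.2.2.2.1)
  · obtain ⟨k, hk, h, hh, rfl⟩ := hF.2.2.2.2.1 g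
    exact ⟨(⟨k, hk⟩, ⟨h, hh⟩), rfl⟩

theorem card_eq (hF : IsFrobeniusWith K H) : Nat.card G = Nat.card K * Nat.card H := by
  rw [← Nat.card_prod, Nat.card_congr (Equiv.ofBijective _ hF.bijective_mul)]

theorem coprime_card [Finite G] (hF : IsFrobeniusWith K H) :
    (Nat.card K).Coprime (Nat.card H) := by
  have hdvd : Nat.card H ∣ Nat.card {k : K // k ≠ 1} :=
    card_dvd_card_subtype_of_fixedPointFree hF.conjEnd hF.eq_one_of_conjAction_eq (fun k => k ≠ 1)
      (fun h k hk h1 => hk ((hF.conjAction h).map_eq_one_iff.mp h1)) (fun h => h rfl)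
  have h := Set.ncard_add_ncard_compl ({1} : Set K)
  rw [Set.ncard_singleton] at h
  have h' : Nat.card {k : K // k ≠ 1} = ({1}ᶜ : Set K).ncard :=
    Nat.card_coe_set_eq ({1}ᶜ : Set K)
  rw [h'] at hdvd
  obtain ⟨t, ht⟩ := hdvd
  rw [← h, ht, Nat.coprime_add_mul_left_left]
  exact Nat.coprime_one_left _

theorem orderCount_eq_of_coprime [Finite G] (hF : IsFrobeniusWith K H) {n : ℕ}
    (hn : n.Coprime (Nat.card H)) : orderCount G n = orderCount K n := by
  have hmem (g : G) (hg : orderOf g = n) : g ∈ K := by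
    obtain ⟨k, hk, h, hh, rfl⟩ := hF.2.2.2.2.1 g
    by_cases h1 : h = 1
    · rwa [h1, mul_one]
    · have hord := hF.orderOf_mul ⟨k, hk⟩ ⟨h, hh⟩ (fun h2 => h1 (congrArg Subtype.val h2))
      have hdvd := orderOf_dvd_natCard (⟨h, hh⟩ : H)
      rw [← hord, hg] at hdvd
      have : orderOf (⟨h, hh⟩ : H) = 1 := by
        rw [← hord, hg]
        exact Nat.eq_one_of_dvd_coprimes hn dvd_rfl hdvd
      exact absurd (congrArg Subtype.val (orderOf_eq_one_iff.mp this)) h1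
  exact Nat.card_congr
    { toFun := fun g => ⟨⟨g.1, hmem g.1 g.2⟩, by rw [Subgroup.orderOf_mk]; exact g.2⟩
      invFun := fun g => ⟨g.1.1, by rw [Subgroup.orderOf_coe]; exact g.2⟩
      left_inv := fun _ => rfl
      right_inv := fun _ => rfl }

theorem orderCount_eq_mul [Finite G] (hF : IsFrobeniusWith K H) {n : ℕ} (hn : n ≠ 1)
    (hK : ∀ k : K, orderOf k ≠ n) : orderCount G n = Nat.card K * orderCount H n := by
  rw [orderCount, orderCount, ← Nat.card_prod]
  symm
  refine Nat.card_congr (Equiv.ofBijective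
    (fun x : K × {h : H // orderOf h = n} => ⟨(x.1 : G) * x.2.1, ?_⟩) ⟨?_, ?_⟩)
  · rw [hF.orderOf_mul x.1 x.2.1 (fun h => hn (by rw [← x.2.2, h, orderOf_one])), x.2.2]
  · rintro ⟨k, h, hh⟩ ⟨k', h', hh'⟩ heq
    have := @hF.bijective_mul.1 (k, h) (k', h') (congrArg Subtype.val heq)
    obtain ⟨rfl, rfl⟩ := Prod.mk.inj this
    rfl
  · rintro ⟨g, hg⟩
    obtain ⟨⟨k, h⟩, rfl⟩ := hF.bijective_mul.2 g
    have h1 : h ≠ 1 := by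
      rintro rfl
      refine hK k ?_
      rw [← hg, ← Subgroup.orderOf_coe]
      simp
    exact ⟨(k, ⟨h, (hF.orderOf_mul k h h1).symm.trans hg⟩), rfl⟩

end IsFrobeniusWith

theorem IsPGroup.not_commutative_of_not_isCyclic {p : ℕ} [hp : Fact p.Prime] {P : Type*}
    [Group P] [Finite P] (hP : IsPGroup p P) (hnc : ¬ IsCyclic P)
    (hcomm : ∀ x y : P, orderOf x = p → orderOf y = p → Commute x y → y ∈ Subgroup.zpowers x) :
    ¬ ∀ x y : P, x * y = y * x := by
  intro h
  rcases subsingleton_or_nontrivial P with hs | hn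
  · exact hnc inferInstance
  · obtain ⟨a, -, -, ha⟩ := hP.exists_normal_cyclic_self_centralizing hcomm
    exact hnc ⟨a, fun x => ha x (h x a)⟩

theorem not_two_pow_add_two_dvd {n m c : ℕ} (hm : Odd m) (hcm : 2 * m ∣ c) (hc : 0 < c)
    (hle : (c + 1) ^ 2 ≤ 2 ^ (n + 3) * m + 1) : ¬ 2 ^ (n + 2) + 2 ∣ 2 ^ (n + 3) * m := by
  intro hdvd
  have hodd : Nat.Coprime (2 ^ (n + 1) + 1) (2 ^ (n + 2)) := by
    refine Nat.Coprime.pow_right _ (Nat.coprime_two_right.mpr ?_)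
    exact Even.add_one ((even_two.pow_of_ne_zero (by lia)))
  have h1 : 2 ^ (n + 1) + 1 ∣ m := by
    refine hodd.dvd_of_dvd_mul_left (Nat.dvd_of_mul_dvd_mul_left two_pos ?_)
    convert hdvd using 1 <;> ring
  have h2 := Nat.le_of_dvd hm.pos h1
  have h3 := Nat.le_of_dvd hc hcm
  have h4 : (2 * m + 1) ^ 2 ≤ 2 ^ (n + 3) * m + 1 :=
    (Nat.pow_le_pow_left (Nat.succ_le_succ h3) 2).trans hle
  have h5 : 2 ^ (n + 3) = 4 * 2 ^ (n + 1) := by ring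
  rw [h5] at h4
  have := hm.pos
  nlinarith

theorem IsFrobeniusWith.mem_zpowers_of_commute_of_orderOf_eq_prime {G : Type*} [Group G]
    [Finite G] {K H : Subgroup G} (hF : IsFrobeniusWith K H) {p : ℕ} [hp : Fact p.Prime]
    (P : Sylow p H) (x y : P) (hx : orderOf x = p) (hy : orderOf y = p) (hxy : Commute x y) :
    y ∈ Subgroup.zpowers x := by
  have : Nontrivial K := (Subgroup.nontrivial_iff_ne_bot _).mpr hF.1
  let _ : MulDistribMulAction P K :=
    MulDistribMulAction.compHom K (hF.conjAction.comp (P : Subgroup H).subtype)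
  exact P.2.mem_zpowers_of_fixedPointFree (K := K)
    (fun g hg k hk => hF.eq_one_of_conjAction_eq g (fun h => hg (Subtype.ext h)) k hk) x y hx hy hxy

theorem IsFrobeniusWith.commute_of_even_card {G : Type*} [Group G] [Finite G] {K H : Subgroup G}
    (hF : IsFrobeniusWith K H) (h2 : 2 ∣ Nat.card H) (x y : K) : Commute x y := by
  have : Fact (Nat.Prime 2) := ⟨Nat.prime_two⟩
  obtain ⟨z, hz⟩ := exists_prime_orderOf_dvd_card' 2 h2
  have hz1 : z ≠ 1 := by
    rintro rfl
    rw [orderOf_one] at hz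
    exact absurd hz (by norm_num)
  have hfree : MonoidHom.FixedPointFree (hF.conjAction z) := hF.eq_one_of_conjAction_eq z hz1
  refine hfree.commute_all_of_involutive (fun k => ?_) x y
  rw [← MulAut.mul_apply, ← map_mul, ← sq, ← hz, pow_orderOf_eq_one, map_one, MulAut.one_apply]

/-- A nilpotent Frobenius complement in a finite Frobenius group with perfect order
classes is cyclic. -/
theorem frobenius_perfectOrderClasses_nilpotent_complement_isCyclic
    {G : Type*} [Group G] [Fintype G] (K H : Subgroup G)
    (hFrob : IsFrobeniusWith K H) (hpoc : PerfectOrderClasses G)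
    (hnil : Group.IsNilpotent H) :
    IsCyclic H := by
  have : Fact (Nat.Prime 2) := ⟨Nat.prime_two⟩
  have hcyc (p : ℕ) (hp : p.Prime) (hp2 : p ≠ 2) (P : Sylow p H) : IsCyclic P := by
    have : Fact p.Prime := ⟨hp⟩
    exact P.2.isCyclic_of_odd (hp.odd_of_ne_two hp2)
      (hFrob.mem_zpowers_of_commute_of_orderOf_eq_prime P)
  suffices hQ : ∀ Q : Sylow 2 H, IsCyclic Q by
    have : IsZGroup H := ⟨fun p hp P => by
      by_cases hp2 : p = 2
      · subst hp2
        exact hQ P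
      · exact hcyc p hp hp2 P⟩
    infer_instance
  intro Q
  by_contra hnc
  have hcomm := hFrob.mem_zpowers_of_commute_of_orderOf_eq_prime Q
  obtain ⟨n, hQn, hQ4⟩ := Q.2.card_orderOf_eq_four hnc hcomm
  obtain ⟨m, hm, hHm⟩ : ∃ m, Odd m ∧ Nat.card H = 2 ^ (n + 3) * m := by
    refine ⟨(Q : Subgroup H).index, ?_, by rw [← hQn]; exact ((Q : Subgroup H).card_mul_index).symm⟩
    rw [← Nat.not_even_iff_odd, even_iff_two_dvd]
    exact Q.not_dvd_index
  have h2m : 2 * m ∣ Nat.card H := by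
    rw [hHm]
    exact mul_dvd_mul_right (dvd_pow_self 2 (by lia)) m
  have h2H : 2 ∣ Nat.card H := (dvd_mul_right 2 m).trans h2m
  have hH4 : orderCount H 4 = 2 ^ (n + 2) + 2 :=
    (orderCount_eq_orderCount_sylow Q 2).trans hQ4
  have hcop := hFrob.coprime_card
  have hK4 (k : K) : orderOf k ≠ 4 := fun hk => by
    have h4 : 2 ∣ Nat.card K :=
      (show 2 ∣ 4 by norm_num).trans (hk ▸ orderOf_dvd_natCard k)
    exact absurd (Nat.eq_one_of_dvd_coprimes hcop h4 h2H) (by norm_num)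
  have hG4 := hFrob.orderCount_eq_mul (by norm_num) hK4
  have hdvd : 2 ^ (n + 2) + 2 ∣ 2 ^ (n + 3) * m := by
    have h := hpoc 4 (by norm_num)
    rw [hG4, hFrob.card_eq, hH4, hHm] at h
    exact Nat.dvd_of_mul_dvd_mul_left Nat.card_pos
      (h.resolve_left (Nat.mul_pos Nat.card_pos (by lia)).ne')
  have hncomm : ¬ ∀ g h : H, g * h = h * g := fun h =>
    Q.2.not_commutative_of_not_isCyclic hnc hcomm fun x y => Subtype.ext (h x y)
  have : Nontrivial K := (Subgroup.nontrivial_iff_ne_bot _).mpr hFrob.1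
  let _ : CommGroup K :=
    { (inferInstance : Group K) with mul_comm := hFrob.commute_of_even_card h2H }
  have hle := sq_card_center_add_one_le_card_add_one hFrob.conjEnd hFrob.eq_one_of_conjAction_eq
    hcop (fun n hn hnH => by
      have h := hpoc n (by lia)
      rwa [hFrob.orderCount_eq_of_coprime hnH, hFrob.card_eq] at h) hncomm
  rw [hHm] at hle
  exact not_two_pow_add_two_dvd hm (two_mul_dvd_card_center hm h2m hcyc) Nat.card_pos hle hdvd
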